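/- arXiv:2412.20729 — 2 statements merged into one kernel-verified Lean document; each statement's English description precedes it below -/
import Mathlib

section
/- If G is a connected chordal graph admitting a tree representation whose host tree T is a subdivided caterpillar, then lpt(G) ≤ 26. -/
open SimpleGraph

/-- A graph is chordal if every cycle on at least 4 vertices has a chord
(an edge of the graph joining two vertices of the cycle that is not an edge of the cycle). -/
def IsChordal {V : Type} (G : SimpleGraph V) : Prop :=
  ∀ (v : V) (c : G.Walk v v), c.IsCycle → 4 ≤ c.length →
    ∃ a b : V, a ∈ c.support ∧ b ∈ c.support ∧ G.Adj a b ∧ s(a, b) ∉ c.edges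

/-- A tree representation of `G` with host tree `T`: each vertex `u` of `G` gets a
nonempty subtree `S u` of `T`, and distinct vertices are adjacent iff their subtrees meet. -/
structure TreeRep {V W : Type} (G : SimpleGraph V) (T : SimpleGraph W) : Type where
  isTree : T.IsTree
  S : V → Set W
  subtree_connected : ∀ u : V, (T.induce (S u)).Connected
  adj_iff : ∀ u v : V, u ≠ v → (G.Adj u v ↔ (S u ∩ S v).Nonempty)

/-- A tree representation is minimal if no tree representation of `G` has a host tree
with fewer vertices. -/
def TreeRep.IsMinimal {V W : Type} [Fintype W] {G : SimpleGraph V} {T : SimpleGraph W}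
    (_R : TreeRep G T) : Prop :=
  ∀ (W' : Type) [Fintype W'] (T' : SimpleGraph W'),
    Nonempty (TreeRep G T') → Fintype.card W ≤ Fintype.card W'

/-- The bag of a host tree vertex `x`. -/
def TreeRep.bag {V W : Type} {G : SimpleGraph V} {T : SimpleGraph W}
    (R : TreeRep G T) (x : W) : Set V :=
  {u : V | x ∈ R.S u}

/-- In `T` rooted at `r`, the (vertex set of the) subtree rooted at `x`: all vertices `w`
such that the `r`–`w` path contains `x`. -/
def rootedSubtree {W : Type} (T : SimpleGraph W) (r x : W) : Set W :=
  {w : W | ∀ p : T.Walk r w, p.IsPath → x ∈ p.support}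

/-- The core of a subgraph `H` of `G`: the union over edges `uv` of `H` of `V(S u ∩ S v)`,
a set of host-tree vertices. -/
def TreeRep.core {V W : Type} {G : SimpleGraph V} {T : SimpleGraph W}
    (R : TreeRep G T) (H : G.Subgraph) : Set W :=
  {t : W | ∃ u v : V, H.Adj u v ∧ t ∈ R.S u ∧ t ∈ R.S v}

/-- `C` is a connected component of the subgraph of `T` induced on the vertex set `s`. -/
def IsCompOf {W : Type} (T : SimpleGraph W) (s C : Set W) : Prop :=
  C.Nonempty ∧ C ⊆ s ∧ (T.induce C).Connected ∧
    ∀ ⦃a b : W⦄, a ∈ C → b ∈ s → T.Adj a b → b ∈ C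

/-- A graph is 2-connected if it has more than 2 vertices and deleting any one vertex
leaves it connected. -/
def TwoConnected {V : Type} (G : SimpleGraph V) : Prop :=
  2 < Nat.card V ∧ ∀ v : V, (G.induce {v}ᶜ).Connected

/-- `G` is `k`-connected: more than `k` vertices, and deleting fewer than `k` vertices
leaves it connected. -/
def IsKConnectedGraph {V : Type} (G : SimpleGraph V) (k : ℕ) : Prop :=
  k < Nat.card V ∧ ∀ s : Set V, s.Finite → s.ncard < k → (G.induce sᶜ).Connected

/-- The vertex connectivity `κ(G)`: the maximum `k` such that `G` is `k`-connected. -/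
noncomputable def vertexConnectivity {V : Type} (G : SimpleGraph V) : ℕ :=
  sSup {k : ℕ | IsKConnectedGraph G k}

/-- `p` is a path of maximum length in `G`. -/
def IsLongestPath {V : Type} (G : SimpleGraph V) {a b : V} (p : G.Walk a b) : Prop :=
  p.IsPath ∧ ∀ (c d : V) (q : G.Walk c d), q.IsPath → q.length ≤ p.length

/-- `c` is a cycle of maximum length in `G`. -/
def IsLongestCycle {V : Type} (G : SimpleGraph V) {a : V} (c : G.Walk a a) : Prop :=
  c.IsCycle ∧ ∀ (d : V) (q : G.Walk d d), q.IsCycle → q.length ≤ c.length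

/-- The longest path transversal number of `G`: the least size of a set of vertices
meeting every longest path. -/
noncomputable def lpt {V : Type} (G : SimpleGraph V) : ℕ :=
  sInf {k : ℕ | ∃ A : Set V, A.Finite ∧ A.ncard = k ∧
    ∀ (a b : V) (p : G.Walk a b), IsLongestPath G p → ∃ v ∈ A, v ∈ p.support}

/-- The longest cycle transversal number of `G`: the least size of a set of vertices
meeting every longest cycle. -/
noncomputable def lct {V : Type} (G : SimpleGraph V) : ℕ :=
  sInf {k : ℕ | ∃ A : Set V, A.Finite ∧ A.ncard = k ∧
    ∀ (a : V) (c : G.Walk a a), IsLongestCycle G c → ∃ v ∈ A, v ∈ c.support}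

/-- `DQX T q X Q0`: the union, over `y ∈ Q0`, of the component of `X − E(Q)` containing
`y` (all vertices joined to some `y ∈ Q0` by a walk inside `X` avoiding the edges of `q`). -/
def DQX {W : Type} (T : SimpleGraph W) {x z : W} (q : T.Walk x z) (X : Set W)
    (Q0 : Set W) : Set W :=
  {w : W | ∃ y ∈ Q0, ∃ d : (T.deleteEdges {e : Sym2 W | e ∈ q.edges}).Walk y w,
    ∀ a ∈ d.support, a ∈ X}

/-- Cutter can force the Cutter–Chooser game from position `(X, x)` (a subtree `X` of the
host tree, rooted at `x`) to end within `t` rounds: Cutter picks `z ∈ X` and cuts along the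
`x`–`z` path `Q` in `X`; either `X = Q` (game over), or for every component `X'` of
`X − V(Q)` (with its root `x'`, the vertex of `X'` adjacent to `Q`) that Chooser may pick,
Cutter wins within `t - 1` further rounds. -/
def cutterWins {W : Type} (T : SimpleGraph W) : ℕ → Set W → W → Prop
  | 0, _, _ => False
  | t + 1, X, x =>
      ∃ z ∈ X, ∃ p : T.Walk x z, p.IsPath ∧ (∀ w ∈ p.support, w ∈ X) ∧
        (X = {w : W | w ∈ p.support} ∨
          ∀ (X' : Set W) (x' : W), IsCompOf T (X \ {w : W | w ∈ p.support}) X' →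
            x' ∈ X' → (∃ u ∈ p.support, T.Adj u x') → cutterWins T t X' x')

/-- `ccg(X, x)`: the number of rounds of the Cutter–Chooser game on the subtree `X` of the
host tree rooted at `x`, under optimal play. -/
noncomputable def ccgOn {W : Type} (T : SimpleGraph W) (X : Set W) (x : W) : ℕ :=
  sInf {t : ℕ | cutterWins T t X x}

/-- `ccg(T)`: the minimum over roots `r` of `ccg(T, r)`. -/
noncomputable def ccg {W : Type} (T : SimpleGraph W) : ℕ :=
  sInf (Set.range fun r : W => ccgOn T Set.univ r)

/-- A subdivided caterpillar: a tree having a (spine) path containing every vertex of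
degree at least 3. -/
def IsSubdividedCaterpillar {W : Type} (T : SimpleGraph W) : Prop :=
  T.IsTree ∧ ∃ (a b : W) (q : T.Walk a b), q.IsPath ∧
    ∀ v : W, 3 ≤ (T.neighborSet v).ncard → v ∈ q.support

/-- A subdivided star: a tree with at most one vertex of degree at least 3. -/
def IsSubdividedStar {W : Type} (T : SimpleGraph W) : Prop :=
  T.IsTree ∧ ∀ v w : W, 3 ≤ (T.neighborSet v).ncard → 3 ≤ (T.neighborSet w).ncard → v = w

/-- A leaf: a vertex of degree 1. -/
def IsLeaf {W : Type} (T : SimpleGraph W) (v : W) : Prop := (T.neighborSet v).ncard = 1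

/-- `mf T`: the maximum over edges `e` of `T` of the minimum number of leaves of `T`
contained in a component of `T − e`. -/
noncomputable def mf {W : Type} (T : SimpleGraph W) : ℕ :=
  sSup {k : ℕ | ∃ u v : W, T.Adj u v ∧
    k = min {w : W | IsLeaf T w ∧ (T.deleteEdges {s(u, v)}).Reachable u w}.ncard
            {w : W | IsLeaf T w ∧ (T.deleteEdges {s(u, v)}).Reachable v w}.ncard}

/-- In `T` rooted at `r`, `v` is a child of `u`. -/
def IsChildIn {W : Type} (T : SimpleGraph W) (r u v : W) : Prop :=
  T.Adj u v ∧ ∀ p : T.Walk r v, p.IsPath → u ∈ p.support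

/-- In `T` rooted at `r`, `u` is childless. -/
def IsChildlessIn {W : Type} (T : SimpleGraph W) (r u : W) : Prop :=
  ¬ ∃ v : W, IsChildIn T r u v

/-!
The spine of the caterpillar is a path `Q` in the host tree `T`, and `T - Q` consists of paths, the
*legs*. Subtrees of a tree have the Helly property, and longest paths of a connected graph pairwise
intersect, so some node of `T` meets every longest path. If this node lies in a leg, two vertices
whose subtrees reach farthest within the leg intercept every longest path that does not reach the
gate of the leg. Up to these two vertices, there is thus a node `y` of `Q` met by every longest
path.

After a vertex `u` of the bag of `y`, a path runs through one leg (possibly through no vertex) and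
then either comes back to a subtree meeting `Q` (an *excursion*) or ends (a *tail*). Among the
longest paths that avoid the two vertices `a` and `b` of the bag reaching farthest along `Q` in both
directions, take an excursion visiting as many leg vertices as possible. A longest path that avoids
`a`, `b`, the two ends of this excursion and one vertex guarding its leg has no excursion at all:
otherwise its excursion could be replaced by the maximal one, closed up through `a` and `b`, to give
a longer path. In the same way, two vertices meet all longest paths that have a tail. Together these
are `2 + 5 + 2 = 9` vertices.
-/

section Betweenness

variable {W : Type*} {T : SimpleGraph W} {r s t x y : W} {F F' : Set W}

/-- Betweenness in a graph: `x` lies on every walk from `s` to `t`. In a tree this says that `x`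
lies on the unique path from `s` to `t`; it is vacuously true when `t` is not reachable from `s`. -/
def Between (T : SimpleGraph W) (s x t : W) : Prop :=
  ∀ p : T.Walk s t, x ∈ p.support

namespace Between

theorem left (s t : W) : Between T s s t := fun p => p.start_mem_support

theorem right (s t : W) : Between T s t t := fun p => p.end_mem_support

theorem symm (h : Between T s x t) : Between T t x s := fun p => by
  simpa using h p.reverse

theorem eq_of_self (h : Between T s x s) : x = s := by
  simpa using h Walk.nil

theorem split (h : Between T s x t) (y : W) : Between T s x y ∨ Between T y x t := by
  by_contra! hsplit
  simp only [Between, not_forall] at hsplit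
  obtain ⟨⟨p, hp⟩, q, hq⟩ := hsplit
  exact ((Walk.mem_support_append_iff p q).1 (h (p.append q))).elim hp hq

theorem trans (hx : Between T r x y) (hy : Between T r y t) : Between T r x t := by
  classical
  exact fun p => p.support_takeUntil_subset_support (hy p) (hx (p.takeUntil y (hy p)))

theorem dist_lt (hT : T.Connected) (h : Between T r x t) (hne : x ≠ t) :
    T.dist r x < T.dist r t := by
  classical
  obtain ⟨p, hp⟩ := hT.exists_walk_length_eq_dist r t
  calc T.dist r x ≤ (p.takeUntil x (h p)).length := dist_le _
    _ < p.length := Walk.length_takeUntil_lt_length (h p) hne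
    _ = T.dist r t := hp

theorem antisymm (hT : T.Connected) (hxy : Between T r x y) (hyx : Between T r y x) : x = y := by
  by_contra hne
  exact (hxy.dist_lt hT hne).not_gt (hyx.dist_lt hT (Ne.symm hne))

theorem comparable (hT : T.Connected) (hx : Between T r x t) (hy : Between T r y t) :
    Between T r x y ∨ Between T r y x := by
  rcases hx.split y with h | hyx
  · exact .inl h
  rcases hy.split x with h | hxy
  · exact .inr h
  · exact .inl (hyx.symm.antisymm hT hxy.symm ▸ right _ _)

end Between

theorem between_of_mem_support (hT : T.IsAcyclic) {p : T.Walk s t} (hp : p.IsPath)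
    (hx : x ∈ p.support) : Between T s x t := by
  classical
  intro q
  have hpq : q.bypass = p :=
    congrArg Subtype.val ((hT.subsingleton_path s t).elim ⟨_, q.bypass_isPath⟩ ⟨p, hp⟩)
  exact q.support_bypass_subset_support (hpq ▸ hx)

/-- Convexity of a vertex set with respect to `Between`. The convex sets of a tree are the vertex
sets of its subtrees. -/
def BetweenConvex (T : SimpleGraph W) (F : Set W) : Prop :=
  ∀ ⦃s⦄, s ∈ F → ∀ ⦃t⦄, t ∈ F → ∀ ⦃x⦄, Between T s x t → x ∈ F

theorem betweenConvex_of_induce_connected (h : (T.induce F).Connected) : BetweenConvex T F := by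
  intro s hs t ht x hx
  obtain ⟨p⟩ := h.preconnected ⟨s, hs⟩ ⟨t, ht⟩
  have hxp : x ∈ (p.map (Embedding.induce F).toHom).support := hx _
  rw [Walk.support_map] at hxp
  obtain ⟨y, -, rfl⟩ := List.mem_map.1 hxp
  exact y.2

theorem betweenConvex_setOf_between (a b : W) : BetweenConvex T {x | Between T a x b} := by
  classical
  intro s hs t ht x hx p
  rcases hx.split a with hsa | hat
  · exact p.support_takeUntil_subset_support (hs p) (hsa.symm _)
  · exact p.support_takeUntil_subset_support (ht p) (hat _)

theorem BetweenConvex.union (hF : BetweenConvex T F) (hF' : BetweenConvex T F')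
    (h : (F ∩ F').Nonempty) : BetweenConvex T (F ∪ F') := by
  obtain ⟨c, hc, hc'⟩ := h
  have mem_of_between : ∀ s ∈ F ∪ F', ∀ x, Between T s x c → x ∈ F ∪ F' := by
    rintro s (hs | hs) x hx
    · exact .inl (hF hs hc hx)
    · exact .inr (hF' hs hc' hx)
  intro s hs t ht x hx
  rcases hx.split c with hx | hx
  · exact mem_of_between s hs x hx
  · exact mem_of_between t ht x hx.symm

theorem isPath_append_of_inter_support {a b c : W} {p : T.Walk a b} {q : T.Walk b c}
    (hp : p.IsPath) (hq : q.IsPath) (h : ∀ x ∈ p.support, x ∈ q.support → x = b) :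
    (p.append q).IsPath := by
  rw [Walk.isPath_def, Walk.support_append]
  have hq' : (b :: q.support.tail).Nodup := by
    rw [Walk.cons_tail_support]
    exact hq.support_nodup
  refine hp.support_nodup.append hq'.of_cons fun x hx hxq => ?_
  exact (List.nodup_cons.1 hq').1 (h x hx (List.mem_of_mem_tail hxq) ▸ hxq)

theorem exists_isPath_meeting_sets_in_ends (hT : T.Connected) {A B : Set W} (hA : A.Nonempty)
    (hB : B.Nonempty) : ∃ u ∈ A, ∃ v ∈ B, ∃ p : T.Walk u v, p.IsPath ∧
      (∀ x ∈ p.support, x ∈ A → x = u) ∧ ∀ x ∈ p.support, x ∈ B → x = v := by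
  classical
  obtain ⟨⟨u, v⟩, ⟨hu, hv⟩, hmin⟩ := exists_minimalFor_of_wellFoundedLT (· ∈ A ×ˢ B)
    (fun e => T.dist e.1 e.2) (hA.prod hB)
  have dist_le_dist : ∀ u' ∈ A, ∀ v' ∈ B, T.dist u v ≤ T.dist u' v' := fun u' hu' v' hv' =>
    (le_total _ _).elim id fun h => hmin (j := (u', v')) ⟨hu', hv'⟩ h
  obtain ⟨p, hp, hlen⟩ := hT.exists_path_of_dist u v
  refine ⟨u, hu, v, hv, p, hp, fun x hx hxA => ?_, fun x hx hxB => ?_⟩ <;> by_contra hne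
  · exact ((dist_le _).trans_lt (Walk.length_dropUntil_lt_length hx hne)).not_ge
      (hlen ▸ dist_le_dist x hxA v hv)
  · exact ((dist_le _).trans_lt (Walk.length_takeUntil_lt_length hx hne)).not_ge
      (hlen ▸ dist_le_dist u hu x hxB)

/-- `g` is the gate of `F` seen from `r`: the vertex of `F` through which every walk from `r`
to `F` passes. -/
def IsGate (T : SimpleGraph W) (F : Set W) (r g : W) : Prop :=
  g ∈ F ∧ ∀ t ∈ F, Between T r g t

theorem BetweenConvex.exists_isGate (hT : T.IsTree) (hF : BetweenConvex T F) (hne : F.Nonempty)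
    (r : W) : ∃ g, IsGate T F r g := by
  obtain ⟨r', rfl, g, hg, p, hp, -, hpF⟩ :=
    exists_isPath_meeting_sets_in_ends hT.connected (Set.singleton_nonempty r) hne
  refine ⟨g, hg, fun t ht => ?_⟩
  obtain ⟨q, hq, -⟩ := hT.connected.exists_path_of_dist g t
  have hqF : ∀ x ∈ q.support, x ∈ F := fun x hx =>
    hF hg ht (between_of_mem_support hT.isAcyclic hq hx)
  exact between_of_mem_support hT.isAcyclic
    (isPath_append_of_inter_support hp hq fun x hxp hxq => hpF x hxp (hqF x hxq))
    ((Walk.mem_support_append_iff p q).2 (.inl p.end_mem_support))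

theorem exists_median (hT : T.IsTree) (r s t : W) :
    ∃ m, Between T r m s ∧ Between T r m t ∧ Between T s m t := by
  obtain ⟨m, hm, hgate⟩ := (betweenConvex_setOf_between r t).exists_isGate hT ⟨r, .left r t⟩ s
  exact ⟨m, (hgate r (.left r t)).symm, hm, hgate t (.right r t)⟩

theorem BetweenConvex.inter_inter_nonempty (hT : T.IsTree) {F₁ F₂ F₃ : Set W}
    (h₁ : BetweenConvex T F₁) (h₂ : BetweenConvex T F₂) (h₃ : BetweenConvex T F₃)
    (h₁₂ : (F₁ ∩ F₂).Nonempty) (h₁₃ : (F₁ ∩ F₃).Nonempty) (h₂₃ : (F₂ ∩ F₃).Nonempty) :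
    (F₁ ∩ F₂ ∩ F₃).Nonempty := by
  obtain ⟨r, hr₁, hr₂⟩ := h₁₂
  obtain ⟨s, hs₁, hs₃⟩ := h₁₃
  obtain ⟨t, ht₂, ht₃⟩ := h₂₃
  obtain ⟨m, hrs, hrt, hst⟩ := exists_median hT r s t
  exact ⟨m, ⟨h₁ hr₁ hs₁ hrs, h₂ hr₂ ht₂ hrt⟩, h₃ hs₃ ht₃ hst⟩

theorem BetweenConvex.helly [Finite W] (hT : T.IsTree) {ι : Type*} {F : ι → Set W}
    (hF : ∀ i, BetweenConvex T (F i)) (hinter : ∀ i j, (F i ∩ F j).Nonempty) :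
    ∃ x, ∀ i, x ∈ F i := by
  obtain ⟨r⟩ := hT.connected.nonempty
  rcases isEmpty_or_nonempty ι with _ | ⟨⟨i₀⟩⟩
  · exact ⟨r, isEmptyElim⟩
  -- A gate farthest from the root `r` lies in every member of the family.
  choose g hg using fun i => (hF i).exists_isGate hT (hinter i i).left r
  obtain ⟨_, ⟨i, rfl⟩, hmax⟩ :=
    Set.exists_max_image (Set.range g) (T.dist r) (Set.toFinite _) ⟨_, i₀, rfl⟩
  refine ⟨g i, fun j => ?_⟩
  obtain ⟨t, hti, htj⟩ := hinter i j
  rcases ((hg i).2 t hti).split (g j) with hij | hji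
  · have heq : g i = g j := by
      by_contra hne
      exact (hij.dist_lt hT.connected hne).not_ge (hmax _ ⟨j, rfl⟩)
    exact heq ▸ (hg j).1
  · exact hF j (hg j).1 htj hji

theorem exists_adj_between (hT : T.IsTree) (hne : s ≠ t) : ∃ c, T.Adj s c ∧ Between T s c t := by
  obtain ⟨p, hp, -⟩ := hT.connected.exists_path_of_dist s t
  exact ⟨p.snd, p.adj_snd (Walk.not_nil_of_ne hne),
    between_of_mem_support hT.isAcyclic hp (p.getVert_mem_support 1)⟩

theorem three_le_ncard_neighborSet_of_between (hT : T.IsTree) {m : W}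
    (hfin : (T.neighborSet m).Finite) (hrs : Between T r m s) (hrt : Between T r m t)
    (hst : Between T s m t) (hr : m ≠ r) (hs : m ≠ s) (ht : m ≠ t) :
    3 ≤ (T.neighborSet m).ncard := by
  have ne_of_between : ∀ {a b c d}, Between T a m b → T.Adj m c → Between T m c a →
      Between T m d b → c ≠ d := by
    rintro a b c _ hab hadj hca hcb rfl
    rcases hab.split c with h | h
    · exact hadj.ne (hca.symm.antisymm hT.connected h).symm
    · exact hadj.ne (hcb.symm.antisymm hT.connected h.symm).symm
  obtain ⟨c, hmc, hcr⟩ := exists_adj_between hT hr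
  obtain ⟨d, hmd, hds⟩ := exists_adj_between hT hs
  obtain ⟨e, hme, het⟩ := exists_adj_between hT ht
  have hcard : ({c, d, e} : Set W).ncard = 3 :=
    Set.ncard_eq_three.2 ⟨c, d, e, ne_of_between hrs hmc hcr hds, ne_of_between hrt hmc hcr het,
      ne_of_between hst hmd hds het, rfl⟩
  rw [← hcard]
  refine Set.ncard_le_ncard ?_ hfin
  rintro x (rfl | rfl | rfl) <;> assumption

end Betweenness

section Legs

variable {W : Type*} {T : SimpleGraph W} {Q F : Set W} {s t x z : W}

/-- The vertices `s` and `t` lie in the same leg of `T` attached to `Q`, that is, in the same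
component of `T - Q`. -/
def SameLeg (T : SimpleGraph W) (Q : Set W) (s t : W) : Prop :=
  ∀ q ∈ Q, ¬ Between T s q t

theorem SameLeg.refl (h : t ∉ Q) : SameLeg T Q t t := fun _ hq hb => h (hb.eq_of_self ▸ hq)

theorem SameLeg.symm (h : SameLeg T Q s t) : SameLeg T Q t s := fun q hq hb => h q hq hb.symm

theorem SameLeg.trans (hst : SameLeg T Q s t) (htx : SameLeg T Q t x) : SameLeg T Q s x :=
  fun q hq hb => (hb.split t).elim (hst q hq) (htx q hq)

theorem BetweenConvex.sameLeg (hF : BetweenConvex T F) (hFQ : Disjoint F Q) (hs : s ∈ F)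
    (ht : t ∈ F) : SameLeg T Q s t :=
  fun _ hq hb => Set.disjoint_left.1 hFQ (hF hs ht hb) hq

theorem IsGate.of_sameLeg (hz : IsGate T Q s z) (h : SameLeg T Q s t) : IsGate T Q t z :=
  ⟨hz.1, fun q hq => ((hz.2 q hq).split t).resolve_left (h z hz.1)⟩

theorem IsGate.between_of_not_sameLeg (hz : IsGate T Q s z) (h : ¬ SameLeg T Q s t) :
    Between T s z t := by
  simp only [SameLeg, not_forall, not_not] at h
  obtain ⟨q, hq, hb⟩ := h
  exact (hz.2 q hq).trans hb

/-- A trunk of a tree: a nonempty subtree containing every branching vertex. Its legs are then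
paths, as for the spine of a subdivided caterpillar. -/
structure IsTrunk (T : SimpleGraph W) (Q : Set W) : Prop where
  convex : BetweenConvex T Q
  nonempty : Q.Nonempty
  branch : ∀ v, 3 ≤ (T.neighborSet v).ncard → v ∈ Q

theorem IsTrunk.exists_forall_sameLeg_between [Finite W] (hT : T.IsTree) (hQ : IsTrunk T Q)
    (hs : s ∉ Q) (hz : z ∈ Q) : ∃ tip, ∀ t, SameLeg T Q s t → Between T z t tip := by
  obtain ⟨tip, htip, hmax⟩ := Set.exists_max_image {t | SameLeg T Q s t} (T.dist z)
    (Set.toFinite _) ⟨s, SameLeg.refl hs⟩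
  refine ⟨tip, fun t ht => ?_⟩
  obtain ⟨m, hzt, hztip, httip⟩ := exists_median hT z t tip
  have hmQ : m ∉ Q := fun hm => (ht.symm.trans htip) m hm httip
  by_cases hmt : m = t
  · exact hmt ▸ hztip
  have hmtip : m ≠ tip := by
    rintro rfl
    exact (hzt.dist_lt hT.connected hmt).not_ge (hmax t ht)
  exact absurd (hQ.branch m (three_le_ncard_neighborSet_of_between hT (Set.toFinite _) hzt hztip
    httip (fun h => hmQ (h ▸ hz)) hmt hmtip)) hmQ

end Legs

section Representation

variable {V W : Type} {G : SimpleGraph V} {T : SimpleGraph W} {Q : Set W}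

namespace TreeRep

theorem betweenConvex_S (R : TreeRep G T) (u : V) : BetweenConvex T (R.S u) :=
  betweenConvex_of_induce_connected (R.subtree_connected u)

theorem S_nonempty (R : TreeRep G T) (u : V) : (R.S u).Nonempty :=
  Set.nonempty_coe_sort.1 (R.subtree_connected u).nonempty

theorem inter_nonempty_of_adj (R : TreeRep G T) {u v : V} (h : G.Adj u v) :
    (R.S u ∩ R.S v).Nonempty :=
  (R.adj_iff u v h.ne).1 h

theorem adj_of_mem (R : TreeRep G T) {u v : V} {t : W} (hu : t ∈ R.S u) (hv : t ∈ R.S v)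
    (hne : u ≠ v) : G.Adj u v :=
  (R.adj_iff u v hne).2 ⟨t, hu, hv⟩

/-- The footprint of a list of vertices: the union of their subtrees in the host tree. -/
def footprint (R : TreeRep G T) (l : List V) : Set W :=
  {t | ∃ u ∈ l, t ∈ R.S u}

theorem betweenConvex_footprint (R : TreeRep G T) {l : List V} (hl : l.IsChain G.Adj) :
    BetweenConvex T (R.footprint l) := by
  induction l with
  | nil => rintro s ⟨u, hu, -⟩; simp at hu
  | cons u l ih =>
    have hcons : R.footprint (u :: l) = R.S u ∪ R.footprint l := by
      ext t
      simp [footprint]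
    rw [hcons]
    rcases l with _ | ⟨v, l⟩
    · have hnil : R.footprint [] = ∅ := by simp [footprint]
      simpa [hnil] using R.betweenConvex_S u
    · obtain ⟨huv, hl⟩ := List.isChain_cons_cons.1 hl
      obtain ⟨t, htu, htv⟩ := R.inter_nonempty_of_adj huv
      exact (R.betweenConvex_S u).union (ih hl) ⟨t, htu, v, List.mem_cons_self, htv⟩

theorem exists_dominating_bag_toward [Nonempty V] [Finite W] (R : TreeRep G T) (x b : W) :
    ∃ v, ∀ u, x ∈ R.S u → x ∈ R.S v ∧ ∀ t, Between T x t b → t ∈ R.S u → t ∈ R.S v := by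
  by_cases hbag : ∃ u, x ∈ R.S u
  swap
  · exact ⟨Classical.arbitrary V, fun u hu => absurd ⟨u, hu⟩ hbag⟩
  obtain ⟨u₀, hu₀⟩ := hbag
  obtain ⟨far, ⟨hfar, v, hxv, hfarv⟩, hmax⟩ := Set.exists_max_image
    {t | Between T x t b ∧ ∃ v, x ∈ R.S v ∧ t ∈ R.S v} (T.dist x) (Set.toFinite _)
    ⟨x, .left x b, u₀, hu₀, hu₀⟩
  refine ⟨v, fun u hu => ⟨hxv, fun t ht htu => ?_⟩⟩
  rcases ht.comparable R.isTree.connected hfar with h | h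
  · exact R.betweenConvex_S v hxv hfarv h
  · by_cases heq : far = t
    · exact heq ▸ hfarv
    · exact absurd (hmax t ⟨ht, u, hu, htu⟩) (h.dist_lt R.isTree.connected heq).not_ge

/-- The vertices `a` and `b` of the bag of `y` dominate this bag along `P`: within `P`, the subtrees
of `a` and `b` together cover the subtree of every vertex of the bag. The condition is vacuous when
the bag is empty. -/
def DominatesBag (R : TreeRep G T) (y : W) (P : Set W) (a b : V) : Prop :=
  ∀ u, y ∈ R.S u → y ∈ R.S a ∧ y ∈ R.S b ∧ ∀ t ∈ P, t ∈ R.S u → t ∈ R.S a ∨ t ∈ R.S b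

theorem exists_dominatesBag_setOf_between [Nonempty V] [Finite W] (R : TreeRep G T) (y c d : W) :
    ∃ a b, R.DominatesBag y {t | Between T c t d} a b := by
  obtain ⟨a, ha⟩ := R.exists_dominating_bag_toward y c
  obtain ⟨b, hb⟩ := R.exists_dominating_bag_toward y d
  refine ⟨a, b, fun u hu => ⟨(ha u hu).1, (hb u hu).1, fun t ht htu => ?_⟩⟩
  exact (ht.split y).imp (fun h => (ha u hu).2 t h.symm htu) (fun h => (hb u hu).2 t h htu)

/-- The vertex `f` is represented inside a leg: its subtree misses `Q`. -/
def IsLegVertex (R : TreeRep G T) (Q : Set W) (f : V) : Prop :=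
  Disjoint (R.S f) Q

theorem sameLeg_of_mem_footprint (R : TreeRep G T) {F : List V} (hF : F.IsChain G.Adj)
    (hleg : ∀ f ∈ F, R.IsLegVertex Q f) {s t : W} (hs : s ∈ R.footprint F)
    (ht : t ∈ R.footprint F) : SameLeg T Q s t := by
  refine (R.betweenConvex_footprint hF).sameLeg (Set.disjoint_left.2 ?_) hs ht
  rintro x ⟨f, hf, hx⟩
  exact Set.disjoint_left.1 (hleg f hf) hx

theorem exists_mem_inter_of_leg_excursion (R : TreeRep G T) (hQ : BetweenConvex T Q) {u e : V}
    {F : List V} (hchain : (u :: F ++ [e]).IsChain G.Adj) (hF : ∀ f ∈ F, R.IsLegVertex Q f)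
    (hu : ¬ R.IsLegVertex Q u) (he : ¬ R.IsLegVertex Q e) :
    ∃ z ∈ Q, z ∈ R.S u ∧ z ∈ R.S e := by
  have hR : BetweenConvex T (R.footprint (F ++ [e])) :=
    R.betweenConvex_footprint hchain.of_cons
  obtain ⟨v, hv, huv⟩ : ∃ v ∈ F ++ [e], G.Adj u v := by
    rcases F with _ | ⟨f, F⟩
    · exact ⟨e, by simp, (List.isChain_cons_cons.1 hchain).1⟩
    · exact ⟨f, by simp, (List.isChain_cons_cons.1 hchain).1⟩
  obtain ⟨t, htu, htv⟩ := R.inter_nonempty_of_adj huv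
  obtain ⟨r, hre, hrQ⟩ := Set.not_disjoint_iff.1 he
  obtain ⟨z, ⟨hzQ, hzu⟩, w, hw, hzw⟩ := hQ.inter_inter_nonempty R.isTree (R.betweenConvex_S u) hR
    ((Set.not_disjoint_iff_nonempty_inter.1 hu).mono fun _ h => h.symm)
    ⟨r, hrQ, e, by simp, hre⟩ ⟨t, htu, v, hv, htv⟩
  rcases List.mem_append.1 hw with hw | hw
  · exact absurd hzQ (Set.disjoint_left.1 (hF w hw) hzw)
  · exact ⟨z, hzQ, hzu, List.mem_singleton.1 hw ▸ hzw⟩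

end TreeRep

end Representation

section LongestPaths

variable {V : Type*} {G : SimpleGraph V}

/-- A longest path of `G`, encoded as the list of its vertices, which can be cut and spliced more
easily than a walk. -/
structure IsLongestPathList (G : SimpleGraph V) (l : List V) : Prop where
  isChain : l.IsChain G.Adj
  nodup : l.Nodup
  length_le : ∀ l' : List V, l'.IsChain G.Adj → l'.Nodup → l'.length ≤ l.length

theorem isChain_adj_reverse {l : List V} (h : l.IsChain G.Adj) : l.reverse.IsChain G.Adj :=
  List.isChain_reverse.2 (h.imp fun _ _ hab => hab.symm)

namespace IsLongestPathList

variable {l l' P F Z N : List V} {u v w : V}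

theorem reverse (h : IsLongestPathList G l) : IsLongestPathList G l.reverse :=
  ⟨isChain_adj_reverse h.isChain, List.nodup_reverse.2 h.nodup, by simpa using h.length_le⟩

theorem ne_nil [Nonempty V] (h : IsLongestPathList G l) : l ≠ [] := by
  rintro rfl
  simpa using h.length_le [Classical.arbitrary V] (by simp) (by simp)

theorem isChain_of_isInfix (h : IsLongestPathList G l) (hF : F <:+: l) : F.IsChain G.Adj := by
  obtain ⟨P, Z, rfl⟩ := hF
  exact h.isChain.left_of_append.right_of_append

theorem length_le_of_isInfix (h : IsLongestPathList G l) (h' : IsLongestPathList G l')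
    (hF : F <:+: l') : F.length ≤ l.length :=
  h.length_le F (h'.isChain_of_isInfix hF) (h'.nodup.sublist hF.sublist)

theorem length_le_of_splice (h : IsLongestPathList G (P ++ F ++ Z)) (hN : N.Nodup)
    (hdisj : N.Disjoint (P ++ F ++ Z)) (hchain : (P ++ N ++ Z).IsChain G.Adj) :
    N.length ≤ F.length := by
  have hPZ : (P ++ Z).Nodup :=
    h.nodup.sublist ((List.sublist_append_left P F).append_right Z)
  have hperm : (P ++ N ++ Z).Perm (N ++ (P ++ Z)) := by
    simpa using (List.perm_append_comm (l₁ := P) (l₂ := N)).append_right Z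
  have hnodup : (P ++ N ++ Z).Nodup := by
    refine hperm.nodup_iff.2 (hN.append hPZ (List.disjoint_of_subset_right ?_ hdisj))
    exact ((List.sublist_append_left P F).append_right Z).subset
  have hlen := h.length_le _ hchain hnodup
  simp only [List.length_append] at hlen
  omega

theorem mem_of_adj_of_adj (h : IsLongestPathList G l) (huw : [u, w] <:+: l) (huv : G.Adj u v)
    (hvw : G.Adj v w) : v ∈ l := by
  obtain ⟨X, Y, rfl⟩ := huw
  by_contra hv
  have hl : IsLongestPathList G ((X ++ [u]) ++ [] ++ (w :: Y)) := by simpa using h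
  obtain ⟨hX, -, hY⟩ := List.isChain_append_cons_cons.1 (by simpa using h.isChain)
  have hle := hl.length_le_of_splice (N := [v]) (by simp) (by simpa using hv)
    (by simpa [List.isChain_append_cons_cons] using ⟨hX, huv, hvw, hY⟩)
  simp at hle

theorem exists_infix_of_adj_of_notMem (h : IsLongestPathList G l) (hu : u ∈ l)
    (huv : G.Adj u v) (hv : v ∉ l) : ∃ w, [u, w] <:+: l := by
  obtain ⟨X, Y, rfl⟩ := List.append_of_mem hu
  rcases Y with _ | ⟨w, Y⟩
  · have hl : IsLongestPathList G ((X ++ [u]) ++ [] ++ []) := by simpa using h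
    have hle := hl.length_le_of_splice (N := [v]) (by simp) (by simpa using hv)
      (by simpa [List.isChain_append_cons_cons] using ⟨h.isChain, huv⟩)
    simp at hle
  · exact ⟨w, X, Y, by simp⟩

theorem exists_perm_append_cons (h : IsLongestPathList G l) (hv : v ∈ l) :
    ∃ X Y, IsLongestPathList G (X ++ v :: Y) ∧ (X ++ v :: Y).Perm l ∧ X.length ≤ Y.length := by
  obtain ⟨X, Y, rfl⟩ := List.append_of_mem hv
  rcases le_total X.length Y.length with hle | hle
  · exact ⟨X, Y, h, .refl _, hle⟩
  · refine ⟨Y.reverse, X.reverse, by simpa using h.reverse, ?_, by simpa using hle⟩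
    simpa using List.reverse_perm (X ++ v :: Y)

theorem length_add_le_of_reroute (h : IsLongestPathList G (P ++ u :: F)) {p : G.Walk u v}
    (hp : p.IsPath) (hchain : (v :: Z).IsChain G.Adj) (hnodup : (v :: Z).Nodup)
    (hpP : ∀ x ∈ p.support, x ∈ P ++ u :: F → x = u) (hpZ : ∀ x ∈ p.support, x ∈ v :: Z → x = v)
    (hdisj : Z.Disjoint (P ++ u :: F)) : p.length + Z.length ≤ F.length := by
  have hsupport : (u :: p.support.tail).Nodup := by
    rw [Walk.cons_tail_support]
    exact hp.support_nodup
  have hpath : (p.support ++ Z).IsChain G.Adj := by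
    refine List.isChain_append.2 ⟨p.isChain_adj_support, hchain.of_cons, fun x hx => ?_⟩
    rw [List.getLast?_eq_some_getLast p.support_ne_nil, Walk.getLast_support,
      Option.mem_some_iff] at hx
    exact hx ▸ List.IsChain.rel_head? hchain
  have hl : IsLongestPathList G ((P ++ [u]) ++ F ++ []) := by simpa using h
  have hle := hl.length_le_of_splice (N := p.support.tail ++ Z) ?_ ?_ ?_
  · simpa using hle
  · refine hsupport.of_cons.append hnodup.of_cons fun x hx hxZ => ?_
    exact (List.nodup_cons.1 hnodup).1
      (hpZ x (List.mem_of_mem_tail hx) (List.mem_cons_of_mem _ hxZ) ▸ hxZ)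
  · rw [List.append_nil, List.append_assoc, List.singleton_append, List.disjoint_append_left]
    refine ⟨fun x hx hxP => ?_, hdisj⟩
    exact (List.nodup_cons.1 hsupport).1 (hpP x (List.mem_of_mem_tail hx) hxP ▸ hx)
  · rw [← Walk.cons_tail_support] at hpath
    simpa using List.isChain_split.2 ⟨(List.isChain_split.1 h.isChain).1, hpath⟩

-- Otherwise, replace the shorter part of `l` by a path to `l'` and the longer part of `l'`.
theorem exists_mem_mem (hG : G.Connected) (h : IsLongestPathList G l)
    (h' : IsLongestPathList G l') : ∃ u ∈ l, u ∈ l' := by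
  have := hG.nonempty
  obtain ⟨u, hu, v, hv, p, hp, hpl, hpl'⟩ := exists_isPath_meeting_sets_in_ends hG
    (A := {u | u ∈ l}) (B := {v | v ∈ l'}) (List.exists_mem_of_ne_nil _ h.ne_nil)
    (List.exists_mem_of_ne_nil _ h'.ne_nil)
  by_contra! hdisj
  obtain ⟨X, Y, hXY, hperm, hle⟩ := h.exists_perm_append_cons hu
  obtain ⟨X', Y', hXY', hperm', hle'⟩ := h'.exists_perm_append_cons hv
  have hYX : (Y.reverse ++ u :: X.reverse).Perm l := by
    simpa using (List.reverse_perm (X ++ u :: Y)).trans hperm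
  have hYl' : ∀ x ∈ v :: Y', x ∈ l' := fun x hx =>
    hperm'.subset (List.mem_append_right _ hx)
  have hlen := length_add_le_of_reroute (by simpa using hXY.reverse) hp
    (List.isChain_split.1 hXY'.isChain).2 hXY'.nodup.of_append_right
    (fun x hx hxl => hpl x hx (hYX.subset hxl)) (fun x hx hxl => hpl' x hx (hYl' x hxl))
    (fun x hx hxl => hdisj x (hYX.subset hxl) (hYl' x (List.mem_cons_of_mem _ hx)))
  have hpos : p.length ≠ 0 := fun h0 => hdisj u hu (Walk.eq_of_length_eq_zero h0 ▸ hv)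
  have hll' := h'.length_le l h.isChain h.nodup
  have hl := hperm.length_eq
  have hl' := hperm'.length_eq
  simp only [List.length_append, List.length_cons, List.length_reverse] at hlen hl hl'
  omega

end IsLongestPathList

theorem IsLongestPath.isLongestPathList {V : Type} {G : SimpleGraph V} {a b : V} {p : G.Walk a b}
    (h : IsLongestPath G p) : IsLongestPathList G p.support := by
  refine ⟨p.isChain_adj_support, h.1.support_nodup, fun l hchain hnodup => ?_⟩
  rcases eq_or_ne l [] with rfl | hne
  · simp
  have hsupport := Walk.support_ofSupport hne hchain
  have hle := h.2 _ _ (Walk.ofSupport l hne hchain) (by rwa [Walk.isPath_def, hsupport])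
  rw [← hsupport, Walk.length_support, Walk.length_support]
  omega

end LongestPaths

theorem exists_infix_pair_of_mem {α : Type*} (p : α → Prop) {l : List α} {f w : α} (hf : f ∈ l)
    (hpf : p f) (hw : w ∈ l) (hpw : ¬ p w) :
    ∃ a b, p a ∧ ¬ p b ∧ ([a, b] <:+: l ∨ [b, a] <:+: l) := by
  by_contra! hno
  have hchain : l.IsChain (fun a b => p a ↔ p b) := by
    refine List.isChain_iff_forall_rel_of_append_cons_cons.2 fun {a b X Y} hl => ?_
    have hab : [a, b] <:+: l := ⟨X, Y, by simp [hl]⟩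
    exact ⟨fun ha => of_not_not fun hb => (hno a b ha hb).1 hab,
      fun hb => of_not_not fun ha => (hno b a hb ha).2 hab⟩
  have : IsTrans α (fun a b => p a ↔ p b) := ⟨fun _ _ _ => Iff.trans⟩
  have : Std.Symm (fun a b => p a ↔ p b) := ⟨fun _ _ => Iff.symm⟩
  exact hpw ((List.Pairwise.forall_of_forall (R := fun a b => p a ↔ p b) (fun _ _ => Iff.rfl)
    hchain.pairwise hf hw).1 hpf)

section Transversal

variable {V W : Type} {G : SimpleGraph V} {T : SimpleGraph W} {R : TreeRep G T} {Q : Set W}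

theorem IsLongestPathList.mem_of_mem_inter {l : List V} {a b v : V} {t : W}
    (h : IsLongestPathList G l) (hab : [a, b] <:+: l ∨ [b, a] <:+: l) (ha : t ∈ R.S a)
    (hb : t ∈ R.S b) (hv : t ∈ R.S v) : v ∈ l := by
  by_contra hvl
  have hmem : a ∈ l ∧ b ∈ l := by
    rcases hab with hab | hab <;> exact ⟨hab.subset (by simp), hab.subset (by simp)⟩
  have hav : G.Adj a v := R.adj_of_mem ha hv (ne_of_mem_of_not_mem hmem.1 hvl)
  have hbv : G.Adj b v := R.adj_of_mem hb hv (ne_of_mem_of_not_mem hmem.2 hvl)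
  rcases hab with hab | hab
  · exact hvl (h.mem_of_adj_of_adj hab hav hbv.symm)
  · exact hvl (h.mem_of_adj_of_adj hab hbv hav.symm)

variable [Finite W]

-- A path entering the leg of `s` uses a vertex whose subtree runs from the gate into the leg.
theorem IsTrunk.exists_vertex_guarding_leg [Nonempty V] (hQ : IsTrunk T Q) (R : TreeRep G T) {s : W}
    (hs : s ∉ Q) : ∃ v, ∀ l, IsLongestPathList G l → v ∉ l → (∃ w ∈ l, ¬ R.IsLegVertex Q w) →
      ∀ f ∈ l, R.IsLegVertex Q f → ∀ t ∈ R.S f, ¬ SameLeg T Q s t := by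
  obtain ⟨z, hz⟩ := hQ.convex.exists_isGate R.isTree hQ.nonempty s
  obtain ⟨tip, htip⟩ := hQ.exists_forall_sameLeg_between R.isTree hs hz.1
  obtain ⟨v, hv⟩ := R.exists_dominating_bag_toward z tip
  refine ⟨v, fun l hl hvl ⟨w, hw, hwleg⟩ f hf hfleg t htf hst => hvl ?_⟩
  obtain ⟨a, b, ⟨haleg, t', ht'a, hst'⟩, hb, hab⟩ := exists_infix_pair_of_mem
    (fun f => R.IsLegVertex Q f ∧ ∃ t ∈ R.S f, SameLeg T Q s t) hf ⟨hfleg, t, htf, hst⟩ hw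
    (fun h => hwleg h.1)
  have hadj : G.Adj a b := by
    rcases hab with hab | hab
    · exact List.isChain_pair.1 (hl.isChain_of_isInfix hab)
    · exact (List.isChain_pair.1 (hl.isChain_of_isInfix hab)).symm
  obtain ⟨x, hxa, hxb⟩ := R.inter_nonempty_of_adj hadj
  have hsx : SameLeg T Q s x := hst'.trans ((R.betweenConvex_S a).sameLeg haleg ht'a hxa)
  obtain ⟨q, hqb, hqQ⟩ := Set.not_disjoint_iff.1 fun hbleg => hb ⟨hbleg, x, hxb, hsx⟩
  have hzb : z ∈ R.S b := R.betweenConvex_S b hxb hqb ((hz.of_sameLeg hsx).2 q hqQ)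
  exact hl.mem_of_mem_inter hab hxa hxb ((hv b hzb).2 x (htip x hsx) hxb)

theorem IsTrunk.exists_vertex_guarding_leg_run [Nonempty V] (hQ : IsTrunk T Q) (R : TreeRep G T)
    {F : List V} (hchain : F.IsChain G.Adj) (hF : ∀ f ∈ F, R.IsLegVertex Q f) :
    ∃ v, ∀ l, IsLongestPathList G l → v ∉ l → (∃ w ∈ l, ¬ R.IsLegVertex Q w) → F.Disjoint l := by
  rcases F with _ | ⟨f, F⟩
  · exact ⟨Classical.arbitrary V, by simp⟩
  obtain ⟨s, hs⟩ := R.S_nonempty f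
  obtain ⟨v, hv⟩ := hQ.exists_vertex_guarding_leg R
    (Set.disjoint_left.1 (hF f List.mem_cons_self) hs)
  refine ⟨v, fun l hl hvl hw g hgF hgl => ?_⟩
  obtain ⟨t, ht⟩ := R.S_nonempty g
  exact hv l hl hvl hw g hgl (hF g hgF) t ht
    (R.sameLeg_of_mem_footprint hchain hF ⟨f, List.mem_cons_self, hs⟩ ⟨g, hgF, ht⟩)

theorem exists_forall_mem_footprint (hG : G.Connected) (R : TreeRep G T) :
    ∃ x, ∀ l, IsLongestPathList G l → x ∈ R.footprint l := by
  obtain ⟨x, hx⟩ := BetweenConvex.helly R.isTree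
    (F := fun l : {l // IsLongestPathList G l} => R.footprint l)
    (fun l => R.betweenConvex_footprint l.2.isChain) fun l l' => by
      obtain ⟨u, hu, hu'⟩ := l.2.exists_mem_mem hG l'.2
      exact (R.S_nonempty u).mono fun t ht => ⟨⟨u, hu, ht⟩, u, hu', ht⟩
  exact ⟨x, fun l hl => hx ⟨l, hl⟩⟩

theorem IsTrunk.exists_bag_meeting_longest_paths (hG : G.Connected) (hQ : IsTrunk T Q)
    (R : TreeRep G T) :
    ∃ y ∈ Q, ∃ A : Finset V, A.card ≤ 2 ∧ ∀ l, IsLongestPathList G l → (∀ v ∈ A, v ∉ l) →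
      ∃ u ∈ l, y ∈ R.S u := by
  classical
  have := hG.nonempty
  obtain ⟨x, hx⟩ := exists_forall_mem_footprint hG R
  by_cases hxQ : x ∈ Q
  · exact ⟨x, hxQ, ∅, by simp, fun l hl _ => hx l hl⟩
  obtain ⟨z, hz⟩ := hQ.convex.exists_isGate R.isTree hQ.nonempty x
  obtain ⟨tip, htip⟩ := hQ.exists_forall_sameLeg_between R.isTree hxQ hz.1
  obtain ⟨a, b, hab⟩ := R.exists_dominatesBag_setOf_between x z tip
  refine ⟨z, hz.1, {a, b}, Finset.card_le_two, fun l hl hA => ?_⟩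
  have ha : a ∉ l := hA a (by simp)
  have hb : b ∉ l := hA b (by simp)
  obtain ⟨u, hul, hxu⟩ := hx l hl
  obtain ⟨hxa, -, hcover⟩ := hab u hxu
  obtain ⟨w, huw⟩ := hl.exists_infix_of_adj_of_notMem hul
    (R.adj_of_mem hxu hxa (ne_of_mem_of_not_mem hul ha)) ha
  obtain ⟨t, htu, htw⟩ := R.inter_nonempty_of_adj (List.isChain_pair.1 (hl.isChain_of_isInfix huw))
  have ht : ¬ SameLeg T Q x t := fun hxt => by
    rcases hcover t (htip t hxt) htu with hta | htb
    · exact ha (hl.mem_of_mem_inter (.inl huw) htu htw hta)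
    · exact hb (hl.mem_of_mem_inter (.inl huw) htu htw htb)
  exact ⟨u, hul, R.betweenConvex_S u hxu htu (hz.between_of_not_sameLeg ht)⟩

end Transversal

section Exchange

variable {V W : Type} {G : SimpleGraph V} {T : SimpleGraph W} {R : TreeRep G T} {Q : Set W}
  {y : W} {a b u u' e e' : V} {l l' F F' : List V}

/-- A segment `u, F, e` of the path `l` which leaves the bag of `y` at `u`, runs through the
vertices `F` of a leg, and comes back to the trunk `Q` at `e`. The list `F` may be empty. -/
structure IsLegExcursion (R : TreeRep G T) (Q : Set W) (y : W) (l : List V) (u : V) (F : List V)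
    (e : V) : Prop where
  isInfix : u :: F ++ [e] <:+: l
  mem_bag : y ∈ R.S u
  isLegVertex : ∀ f ∈ F, R.IsLegVertex Q f
  not_isLegVertex : ¬ R.IsLegVertex Q e

/-- A final segment `u, F` of the path `l` which leaves the bag of `y` at `u` and ends after running
through the vertices `F` of a leg. The list `F` may be empty. -/
structure IsLegTail (R : TreeRep G T) (Q : Set W) (y : W) (l : List V) (u : V) (F : List V) :
    Prop where
  isSuffix : u :: F <:+ l
  mem_bag : y ∈ R.S u
  isLegVertex : ∀ f ∈ F, R.IsLegVertex Q f

theorem IsLegExcursion.run_isInfix (h : IsLegExcursion R Q y l u F e) : F <:+: l :=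
  (List.infix_append [u] F [e]).trans h.isInfix

theorem IsLegTail.run_isInfix (h : IsLegTail R Q y l u F) : F <:+: l :=
  ((List.suffix_cons u F).trans h.isSuffix).isInfix

theorem TreeRep.not_isLegVertex_of_mem (hy : y ∈ Q) (hu : y ∈ R.S u) : ¬ R.IsLegVertex Q u :=
  Set.not_disjoint_iff.2 ⟨y, hu, hy⟩

theorem exists_isLegExcursion_or_isLegTail (hul : u ∈ l) (hu : y ∈ R.S u) :
    (∃ F e, IsLegExcursion R Q y l u F e) ∨ ∃ F, IsLegTail R Q y l u F := by
  classical
  obtain ⟨X, Y, rfl⟩ := List.append_of_mem hul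
  rcases hfind : Y.find? (fun f => ¬ R.IsLegVertex Q f) with _ | e
  · exact .inr ⟨Y, ⟨X, rfl⟩, hu, by simpa using hfind⟩
  · obtain ⟨he, F, Z, rfl, hF⟩ := List.find?_eq_some_iff_append.1 hfind
    exact .inl ⟨F, e, ⟨X, Z, by simp⟩, hu, by simpa using hF, by simpa using he⟩

theorem TreeRep.DominatesBag.exists_connector (hab : R.DominatesBag y Q a b) {z z' : W}
    (hzQ : z ∈ Q) (hzQ' : z' ∈ Q) (hyu : y ∈ R.S u) (hzu : z ∈ R.S u) (hze : z ∈ R.S e)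
    (hyu' : y ∈ R.S u') (hzu' : z' ∈ R.S u') (hze' : z' ∈ R.S e')
    (hne : ∀ c ∈ ({a, b} : Set V), c ≠ e ∧ c ≠ e') :
    ∃ M : List V, M.Nodup ∧ (∀ c ∈ M, c ∈ ({a, b} : Set V)) ∧ (e' :: M ++ [e]).IsChain G.Adj := by
  obtain ⟨hya, hyb, hcover⟩ := hab u hyu
  have mem_bag : ∀ c ∈ ({a, b} : Set V), y ∈ R.S c := by
    rintro c (rfl | rfl) <;> assumption
  obtain ⟨c, hc, hzc⟩ : ∃ c ∈ ({a, b} : Set V), z ∈ R.S c := by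
    simpa using hcover z hzQ hzu
  obtain ⟨c', hc', hzc'⟩ : ∃ c ∈ ({a, b} : Set V), z' ∈ R.S c := by
    simpa using (hab u' hyu').2.2 z' hzQ' hzu'
  have hce : G.Adj c e := R.adj_of_mem hzc hze (hne c hc).1
  have hce' : G.Adj e' c' := R.adj_of_mem hze' hzc' (hne c' hc').2.symm
  by_cases hcc : c' = c
  · subst hcc
    exact ⟨[c'], by simp, by simpa using hc, by simp [hce, hce']⟩
  · exact ⟨[c', c], by simpa using hcc, by simpa using ⟨hc', hc⟩,
      by simp [hce, hce', R.adj_of_mem (mem_bag c' hc') (mem_bag c hc) hcc]⟩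

-- Otherwise, `F` could be replaced in `l` by `u', F', e'`, followed by `a` or `b` or both.
theorem IsLegExcursion.length_lt (hQ : BetweenConvex T Q) (hy : y ∈ Q)
    (hab : R.DominatesBag y Q a b) (hl : IsLongestPathList G l) (hl' : IsLongestPathList G l')
    (h : IsLegExcursion R Q y l u F e) (h' : IsLegExcursion R Q y l' u' F' e')
    (habl : ∀ c ∈ ({a, b} : Set V), c ∉ l ∧ c ∉ l') (hu' : u' ∉ l) (he' : e' ∉ l)
    (hF' : F'.Disjoint l) : F'.length < F.length := by
  obtain ⟨z, hzQ, hzu, hze⟩ := R.exists_mem_inter_of_leg_excursion hQ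
    (hl.isChain_of_isInfix h.isInfix) h.isLegVertex
    (TreeRep.not_isLegVertex_of_mem hy h.mem_bag) h.not_isLegVertex
  obtain ⟨z', hzQ', hzu', hze'⟩ := R.exists_mem_inter_of_leg_excursion hQ
    (hl'.isChain_of_isInfix h'.isInfix) h'.isLegVertex
    (TreeRep.not_isLegVertex_of_mem hy h'.mem_bag) h'.not_isLegVertex
  obtain ⟨M, hM, hMab, hMchain⟩ := hab.exists_connector hzQ hzQ' h.mem_bag hzu hze h'.mem_bag hzu'
    hze' fun c hc => ⟨(ne_of_mem_of_not_mem (h.isInfix.subset (by simp)) (habl c hc).1).symm,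
      (ne_of_mem_of_not_mem (h'.isInfix.subset (by simp)) (habl c hc).2).symm⟩
  have huu' : G.Adj u u' := R.adj_of_mem h.mem_bag h'.mem_bag
    (ne_of_mem_of_not_mem (h.isInfix.subset (by simp)) hu')
  obtain ⟨X, Z, rfl⟩ := h.isInfix
  have hN : (u' :: F' ++ [e'] ++ M).Nodup :=
    (hl'.nodup.sublist h'.isInfix.sublist).append hM fun c hc hcM =>
      (habl c (hMab c hcM)).2 (h'.isInfix.subset hc)
  have hdisj : (u' :: F' ++ [e'] ++ M).Disjoint (X ++ (u :: F ++ [e]) ++ Z) := by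
    simp only [List.disjoint_append_left, List.disjoint_cons_left, List.disjoint_nil_left,
      and_true]
    exact ⟨⟨⟨hu', hF'⟩, he'⟩, fun c hc => (habl c (hMab c hc)).1⟩
  have hchain : ((X ++ [u]) ++ (u' :: F' ++ [e'] ++ M) ++ (e :: Z)).IsChain G.Adj := by
    have hl : ((X ++ [u]) ++ F ++ (e :: Z)).IsChain G.Adj := by simpa using hl.isChain
    have hreturn : ((u' :: F') ++ e' :: (M ++ e :: Z)).IsChain G.Adj := List.isChain_split.2
      ⟨hl'.isChain_of_isInfix h'.isInfix, List.isChain_split (l₁ := e' :: M) |>.2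
        ⟨hMchain, hl.right_of_append⟩⟩
    simpa using List.isChain_append_cons_cons.2 ⟨hl.left_of_append.left_of_append, huu', hreturn⟩
  have hle := IsLongestPathList.length_le_of_splice (P := X ++ [u]) (F := F) (Z := e :: Z)
    (by simpa using hl) hN (by simpa using hdisj) hchain
  simp only [List.length_append, List.length_cons] at hle
  omega

theorem IsLegTail.length_lt (hl : IsLongestPathList G l) (hl' : IsLongestPathList G l')
    (h : IsLegTail R Q y l u F) (h' : IsLegTail R Q y l' u' F') (hu' : u' ∉ l)
    (hF' : F'.Disjoint l) : F'.length < F.length := by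
  have huu' : G.Adj u u' := R.adj_of_mem h.mem_bag h'.mem_bag
    (ne_of_mem_of_not_mem (h.isSuffix.subset (by simp)) hu')
  obtain ⟨X, rfl⟩ := h.isSuffix
  have hchain : (X ++ u :: u' :: F').IsChain G.Adj := List.isChain_append_cons_cons.2
    ⟨(List.isChain_split.1 hl.isChain).1, huu', hl'.isChain.suffix h'.isSuffix⟩
  have hdisj : (u' :: F').Disjoint (X ++ u :: F) := List.disjoint_cons_left.2 ⟨hu', hF'⟩
  have hle := IsLongestPathList.length_le_of_splice (P := X ++ [u]) (F := F) (Z := [])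
    (by simpa using hl) (hl'.nodup.sublist h'.isSuffix.sublist)
    (by simpa using hdisj) (by simpa using hchain)
  simpa using hle

end Exchange

theorem exists_forall_length_le {α : Type*} {p : List α → Prop} {n : ℕ} (hp : ∃ F, p F)
    (hn : ∀ F, p F → F.length ≤ n) : ∃ F, p F ∧ ∀ F', p F' → F'.length ≤ F.length := by
  have hbdd : BddAbove (List.length '' {F | p F}) := ⟨n, Set.forall_mem_image.2 hn⟩
  obtain ⟨F, hF, hlen⟩ := Nat.sSup_mem (Set.Nonempty.image _ hp) hbdd
  exact ⟨F, hF, fun F' hF' => hlen ▸ le_csSup hbdd ⟨F', hF', rfl⟩⟩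

section Bound

variable {V W : Type} [Finite W] {G : SimpleGraph V} {T : SimpleGraph W} {R : TreeRep G T}
  {Q : Set W} {y : W}

theorem IsTrunk.exists_forall_not_isLegExcursion [Nonempty V] (hQ : IsTrunk T Q) (hy : y ∈ Q)
    {a b : V} (hab : R.DominatesBag y Q a b) :
    ∃ A : Finset V, A.card ≤ 5 ∧ ∀ l, IsLongestPathList G l → (∀ v ∈ A, v ∉ l) →
      ∀ u F e, ¬ IsLegExcursion R Q y l u F e := by
  classical
  let avoidable (F : List V) : Prop := ∃ l u e, IsLongestPathList G l ∧
    (∀ c ∈ ({a, b} : Set V), c ∉ l) ∧ IsLegExcursion R Q y l u F e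
  by_cases hex : ∃ F, avoidable F
  swap
  · exact ⟨{a, b}, Finset.card_le_two.trans (by norm_num), fun l hl hA u F e h =>
      hex ⟨F, l, u, e, hl, by simpa using hA, h⟩⟩
  have ⟨_, l₀, _, _, hl₀, _⟩ := hex
  obtain ⟨F', ⟨l', u', e', hl', habl', h'⟩, hmax⟩ := exists_forall_length_le (n := l₀.length) hex
    fun F ⟨l, u, e, hl, _, h⟩ => hl₀.length_le_of_isInfix hl h.run_isInfix
  obtain ⟨v, hv⟩ := hQ.exists_vertex_guarding_leg_run R (hl'.isChain_of_isInfix h'.run_isInfix)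
    h'.isLegVertex
  refine ⟨{a, b, u', e', v}, Finset.card_le_five, fun l hl hA u F e h => ?_⟩
  have habl : ∀ c ∈ ({a, b} : Set V), c ∉ l := by
    rintro c (rfl | rfl) <;> exact hA _ (by simp)
  refine (hmax F ⟨l, u, e, hl, habl, h⟩).not_gt
    (h.length_lt hQ.convex hy hab hl hl' h' (fun c hc => ⟨habl c hc, habl' c hc⟩)
      (hA u' (by simp)) (hA e' (by simp)) (hv l hl (hA v (by simp)) ?_))
  exact ⟨u, h.isInfix.subset (by simp), TreeRep.not_isLegVertex_of_mem hy h.mem_bag⟩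

theorem IsTrunk.exists_forall_not_isLegTail [Nonempty V] (hQ : IsTrunk T Q) (hy : y ∈ Q) :
    ∃ A : Finset V, A.card ≤ 2 ∧ ∀ l, IsLongestPathList G l → (∀ v ∈ A, v ∉ l) →
      ∀ u F, ¬ IsLegTail R Q y l u F := by
  classical
  by_cases hex : ∃ F l u, IsLongestPathList G l ∧ IsLegTail R Q y l u F
  swap
  · exact ⟨∅, by simp, fun l hl _ u F h => hex ⟨F, l, u, hl, h⟩⟩
  have ⟨_, l₀, _, hl₀, _⟩ := hex
  obtain ⟨F', ⟨l', u', hl', h'⟩, hmax⟩ := exists_forall_length_le (n := l₀.length) hex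
    fun F ⟨l, u, hl, h⟩ => hl₀.length_le_of_isInfix hl h.run_isInfix
  obtain ⟨v, hv⟩ := hQ.exists_vertex_guarding_leg_run R (hl'.isChain_of_isInfix h'.run_isInfix)
    h'.isLegVertex
  refine ⟨{u', v}, Finset.card_le_two, fun l hl hA u F h => ?_⟩
  refine (hmax F ⟨l, u, hl, h⟩).not_gt
    (h.length_lt hl hl' h' (hA u' (by simp)) (hv l hl (hA v (by simp)) ?_))
  exact ⟨u, h.isSuffix.subset (by simp), TreeRep.not_isLegVertex_of_mem hy h.mem_bag⟩

theorem exists_transversal_card_le_nine (hG : G.Connected) (R : TreeRep G T) {c d : W}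
    (hQ : IsTrunk T {x | Between T c x d}) :
    ∃ A : Finset V, A.card ≤ 9 ∧ ∀ l, IsLongestPathList G l → ∃ v ∈ A, v ∈ l := by
  classical
  have := hG.nonempty
  obtain ⟨y, hy, A₁, hA₁, hbag⟩ := hQ.exists_bag_meeting_longest_paths hG R
  obtain ⟨a, b, hab⟩ := R.exists_dominatesBag_setOf_between y c d
  obtain ⟨A₂, hA₂, hexcursion⟩ := hQ.exists_forall_not_isLegExcursion hy hab
  obtain ⟨A₃, hA₃, htail⟩ := hQ.exists_forall_not_isLegTail (R := R) hy
  refine ⟨A₁ ∪ A₂ ∪ A₃, ?_, fun l hl => ?_⟩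
  · have h₁₂ := Finset.card_union_le A₁ A₂
    have h₁₂₃ := Finset.card_union_le (A₁ ∪ A₂) A₃
    omega
  · by_contra! hmiss
    obtain ⟨u, hul, hu⟩ := hbag l hl fun v hv => hmiss v (by simp [hv])
    rcases exists_isLegExcursion_or_isLegTail hul hu with ⟨F, e, h⟩ | ⟨F, h⟩
    · exact hexcursion l hl (fun v hv => hmiss v (by simp [hv])) u F e h
    · exact htail l hl (fun v hv => hmiss v (by simp [hv])) u F h

end Bound

theorem IsSubdividedCaterpillar.exists_isTrunk {W : Type} {T : SimpleGraph W}
    (h : IsSubdividedCaterpillar T) : ∃ c d, IsTrunk T {x | Between T c x d} := by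
  obtain ⟨hT, c, d, q, hq, hbranch⟩ := h
  exact ⟨c, d, betweenConvex_setOf_between c d, ⟨c, .left c d⟩,
    fun v hv => between_of_mem_support hT.isAcyclic hq (hbranch v hv)⟩

theorem lpt_le_of_forall_isLongestPathList {V : Type} {G : SimpleGraph V} {k : ℕ} {A : Finset V}
    (hcard : A.card ≤ k) (hA : ∀ l, IsLongestPathList G l → ∃ v ∈ A, v ∈ l) : lpt G ≤ k := by
  refine le_trans (Nat.sInf_le ⟨A, A.finite_toSet, Set.ncard_coe_finset A, ?_⟩) hcard
  exact fun a b p hp => hA p.support hp.isLongestPathList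

theorem lpt_le_26_of_caterpillar_general {V W : Type} [Finite W] (G : SimpleGraph V)
    (T : SimpleGraph W) (hconn : G.Connected) (R : TreeRep G T)
    (hcat : IsSubdividedCaterpillar T) : lpt G ≤ 9 := by
  obtain ⟨c, d, hQ⟩ := hcat.exists_isTrunk
  obtain ⟨A, hcard, hA⟩ := exists_transversal_card_le_nine hconn R hQ
  exact lpt_le_of_forall_isLongestPathList hcard hA

/-- If `G` is a connected chordal graph admitting a tree representation
whose host tree is a subdivided caterpillar, then `lpt(G) ≤ 26`. -/
theorem lpt_le_26_of_caterpillar {V W : Type} [Fintype V] [Fintype W] (G : SimpleGraph V)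
    (T : SimpleGraph W) (hconn : G.Connected) (hchordal : IsChordal G)
    (R : TreeRep G T) (hcat : IsSubdividedCaterpillar T) :
    lpt G ≤ 26 :=
  (lpt_le_26_of_caterpillar_general G T hconn R hcat).trans (by norm_num)
end

section
/- Let T be a tree rooted at r with k childless vertices. Then there exists a path P in T with r as an endpoint such that every component of T − V(P) contains at most k/2 childless vertices. -/
open SimpleGraph

/-!
The result holds in every connected graph, for any finite set of marked vertices. Call a component
heavy if it contains more than half of the marked vertices; any two heavy sets meet. Suppose that
`G - V(P)` has a heavy component `C`. Cut `P` back to its last vertex with a neighbour in `C`, which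
leaves `C` a component, and then extend the path through `C` to a marked vertex `l` of `C`. A heavy
component of what remains meets `C`, hence lies inside `C`, and it misses `l`. So the number of
marked vertices in the heavy component drops strictly, and the process stops.
-/

section Path

variable {V : Type*} {G : SimpleGraph V} {C : Set V} {r u v w x z l : V}

theorem isPath_append_of_disjoint {p : G.Walk u v} {q : G.Walk v w} (hp : p.IsPath)
    (hq : q.IsPath) (hpq : p.support.Disjoint q.support.tail) : (p.append q).IsPath := by
  rw [Walk.isPath_def, Walk.support_append]
  exact hp.support_nodup.append hq.support_nodup.tail hpq

theorem exists_isPath_support_subset_of_preconnected_induce (hC : (G.induce C).Preconnected)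
    (hx : x ∈ C) (hl : l ∈ C) : ∃ p : G.Walk x l, p.IsPath ∧ ∀ w ∈ p.support, w ∈ C := by
  obtain ⟨p, hp⟩ := hC.exists_isPath ⟨x, hx⟩ ⟨l, hl⟩
  let ι : G.induce C ↪g G := Embedding.induce C
  refine ⟨p.map ι.toHom, hp.map ι.injective, fun w hw => ?_⟩
  obtain ⟨c, -, rfl⟩ := List.mem_map.1 (Walk.support_map ι.toHom p ▸ hw :)
  exact c.2

theorem exists_isPath_extending_of_adj {p : G.Walk r z} (hp : p.IsPath)
    (hC : (G.induce C).Preconnected) (hpC : ∀ w ∈ C, w ∉ p.support) (hzx : G.Adj z x)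
    (hx : x ∈ C) (hl : l ∈ C) : ∃ q : G.Walk r l, q.IsPath ∧ p.support ⊆ q.support := by
  obtain ⟨t, ht, htC⟩ := exists_isPath_support_subset_of_preconnected_induce hC hx hl
  have hzt : (Walk.cons hzx t).IsPath :=
    ht.cons fun hz => hpC z (htC z hz) p.end_mem_support
  have hdisj : p.support.Disjoint (Walk.cons hzx t).support.tail :=
    fun w hwp hwt => hpC w (htC w hwt) hwp
  exact ⟨p.append (.cons hzx t), isPath_append_of_disjoint hp hzt hdisj,
    Walk.support_subset_support_append_left _ _⟩

end Path

section Component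

variable {W : Type} {G : SimpleGraph W} {s t C D : Set W} {r v z l : W}

theorem IsCompOf.subset_of_preconnected_induce (hC : IsCompOf G s C)
    (hD : (G.induce D).Preconnected) (hDs : D ⊆ s) (hCD : (C ∩ D).Nonempty) : D ⊆ C := by
  obtain ⟨-, -, -, hclosed⟩ := hC
  obtain ⟨c, hcC, hcD⟩ := hCD
  intro d hdD
  by_contra hdC
  obtain ⟨p⟩ := hD ⟨c, hcD⟩ ⟨d, hdD⟩
  obtain ⟨e, -, hfst, hsnd⟩ := p.exists_boundary_dart {w | w.1 ∈ C} hcC hdC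
  exact hsnd (hclosed hfst (hDs e.snd.2) e.adj)

theorem IsCompOf.exists_adj_of_notMem (hC : IsCompOf G s C) (hG : G.Preconnected) (hv : v ∉ s) :
    ∃ u ∉ s, ∃ x ∈ C, G.Adj u x := by
  obtain ⟨⟨c, hc⟩, hCs, -, hclosed⟩ := hC
  obtain ⟨p⟩ := hG c v
  obtain ⟨e, -, hfst, hsnd⟩ := p.exists_boundary_dart C hc fun h => hv (hCs h)
  exact ⟨e.snd, fun h => hsnd (hclosed hfst h e.adj), e.fst, hfst, e.adj.symm⟩

theorem IsCompOf.of_subset_of_not_adj (hC : IsCompOf G s C) (hst : s ⊆ t)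
    (hadj : ∀ x ∈ C, ∀ u ∈ t \ s, ¬ G.Adj u x) : IsCompOf G t C := by
  obtain ⟨hne, hCs, hconn, hclosed⟩ := hC
  refine ⟨hne, hCs.trans hst, hconn, fun x u hx hu hxu => ?_⟩
  by_cases hus : u ∈ s
  · exact hclosed hx hus hxu
  · exact absurd hxu.symm (hadj x hx u ⟨hu, hus⟩)

theorem exists_isPath_isCompOf_adj_end (hG : G.Preconnected) {p : G.Walk r z} (hp : p.IsPath)
    (hC : IsCompOf G {w | w ∉ p.support} C) :
    ∃ (y : W) (q : G.Walk r y), q.IsPath ∧ IsCompOf G {w | w ∉ q.support} C ∧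
      ∃ x ∈ C, G.Adj y x := by
  induction p using Walk.concatRec with
  | @Hnil r =>
    have hr : r ∉ {w | w ∉ (Walk.nil : G.Walk r r).support} := by simp
    obtain ⟨u, hu, x, hx, hux⟩ := hC.exists_adj_of_notMem hG hr
    obtain rfl : u = r := by simpa using hu
    exact ⟨u, .nil, hp, hC, x, hx, hux⟩
  | @Hconcat r y z p hyz ih =>
    by_cases hz : ∃ x ∈ C, G.Adj z x
    · exact ⟨z, p.concat hyz, hp, hC, hz⟩
    · push Not at hz
      refine ih (Walk.concat_isPath_iff hyz |>.1 hp).1 (hC.of_subset_of_not_adj ?_ ?_)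
      · exact fun w hw hwp => hw (Walk.support_subset_support_concat p hyz hwp)
      · rintro x hx u ⟨(hup : u ∉ p.support), huz⟩
        obtain rfl : u = z := by simpa [Walk.support_concat, hup] using huz
        exact hz x hx

theorem exists_isPath_forall_isCompOf_subset (hG : G.Preconnected) {p : G.Walk r z}
    (hp : p.IsPath) (hC : IsCompOf G {w | w ∉ p.support} C) (hl : l ∈ C) :
    ∃ q : G.Walk r l, q.IsPath ∧
      ∀ D, IsCompOf G {w | w ∉ q.support} D → (C ∩ D).Nonempty → D ⊆ C := by
  obtain ⟨y, t, ht, hCt, x, hx, hyx⟩ := exists_isPath_isCompOf_adj_end hG hp hC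
  have ⟨_, htC, hCconn, _⟩ := hCt
  obtain ⟨q, hq, htq⟩ := exists_isPath_extending_of_adj ht hCconn.preconnected htC hyx hx hl
  refine ⟨q, hq, fun D ⟨_, hDq, hDconn, _⟩ hCD => ?_⟩
  exact hCt.subset_of_preconnected_induce hDconn.preconnected
    (fun w hw hwt => hDq hw (htq hwt)) hCD

end Component

theorem inter_nonempty_of_ncard_lt_two_mul {α : Type*} {A B L : Set α} (hL : L.Finite)
    (hA : L.ncard < 2 * (A ∩ L).ncard) (hB : L.ncard < 2 * (B ∩ L).ncard) :
    (A ∩ B).Nonempty := by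
  by_contra hAB
  have hdisj : Disjoint (A ∩ L) (B ∩ L) :=
    (Set.disjoint_iff_inter_eq_empty.2 (Set.not_nonempty_iff_eq_empty.1 hAB)).mono
      Set.inter_subset_left Set.inter_subset_left
  have hunion := Set.ncard_union_eq hdisj (hL.inter_of_right A) (hL.inter_of_right B)
  have hle : (A ∩ L ∪ B ∩ L).ncard ≤ L.ncard :=
    Set.ncard_le_ncard (Set.union_subset Set.inter_subset_right Set.inter_subset_right) hL
  omega

theorem tree_path_divide_leaves_general {W : Type} {G : SimpleGraph W} (hG : G.Preconnected)
    (r : W) {L : Set W} (hL : L.Finite) :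
    ∃ (b : W) (p : G.Walk r b), p.IsPath ∧
      ∀ C : Set W, IsCompOf G {w | w ∉ p.support} C → 2 * (C ∩ L).ncard ≤ L.ncard := by
  by_contra! exists_heavy
  have no_heavy : ∀ (b : W) (p : G.Walk r b) (C : Set W), p.IsPath →
      IsCompOf G {w | w ∉ p.support} C → ¬ L.ncard < 2 * (C ∩ L).ncard := by
    intro b p C hp hC hheavy
    induction hn : (C ∩ L).ncard using Nat.strong_induction_on generalizing b p C with
    | _ n ih =>
    obtain ⟨l, hlC, hlL⟩ : (C ∩ L).Nonempty := Set.nonempty_of_ncard_ne_zero (by omega)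
    obtain ⟨q, hq, hsubset⟩ := exists_isPath_forall_isCompOf_subset hG hp hC hlC
    obtain ⟨D, hD, hDheavy⟩ := exists_heavy l q hq
    have hDC : D ⊆ C := hsubset D hD (inter_nonempty_of_ncard_lt_two_mul hL hheavy hDheavy)
    have hlD : l ∉ D := fun h => hD.2.1 h q.end_mem_support
    have hlt : (D ∩ L).ncard < (C ∩ L).ncard :=
      Set.ncard_lt_ncard (Set.ssubset_iff_of_subset (Set.inter_subset_inter_left L hDC) |>.2
        ⟨l, ⟨hlC, hlL⟩, fun h => hlD h.1⟩) (hL.inter_of_right C)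
    exact ih _ (hn ▸ hlt) l q D hq hD hDheavy rfl
  obtain ⟨C, hC, hheavy⟩ := exists_heavy r .nil .nil
  exact no_heavy r .nil C .nil hC hheavy

/-- Let `T` be a tree rooted at `r` with `k` childless vertices. Then there
is a path `P = p` with `r` as an endpoint such that every component of `T − V(P)` contains
at most `k/2` childless vertices. -/
theorem tree_path_divide_leaves {W : Type} [Fintype W] (T : SimpleGraph W)
    (hT : T.IsTree) (r : W) (k : ℕ) (hk : {v : W | IsChildlessIn T r v}.ncard = k) :
    ∃ (b : W) (p : T.Walk r b), p.IsPath ∧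
      ∀ C : Set W, IsCompOf T {w : W | w ∉ p.support} C →
        2 * {v : W | v ∈ C ∧ IsChildlessIn T r v}.ncard ≤ k := by
  subst hk
  exact tree_path_divide_leaves_general hT.connected.preconnected r (Set.toFinite _)
end
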